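/- Let X be a Banach space over 𝕂 (= ℝ or ℂ). The following are equivalent: (a) X is reflexive (the canonical embedding of X into its bidual X** is surjective); (b) NA(X,Y) = QNA(X,Y) for every Banach space Y over 𝕂; (c) there exists a nontrivial (nonzero) Banach space Y over 𝕂 such that NA(X,Y) = QNA(X,Y). -/

import Mathlib

/-- A witness for statement (c): a nontrivial Banach space `Y` over `𝕜` such that
`NA(X,Y) = QNA(X,Y)`. -/
structure NAEqQNAWitness (𝕜 : Type) [RCLike 𝕜] (X : Type)
    [NormedAddCommGroup X] [NormedSpace 𝕜 X] : Type 1 where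
  Y : Type
  [instNorm : NormedAddCommGroup Y]
  [instSpace : NormedSpace 𝕜 Y]
  [instComplete : CompleteSpace Y]
  [instNontrivial : Nontrivial Y]
  na_eq_qna : {T : X →L[𝕜] Y | ∃ x₀ : X, ‖x₀‖ = 1 ∧ ‖T x₀‖ = ‖T‖} =
    {T : X →L[𝕜] Y | ∃ u ∈ closure (⇑T '' Metric.closedBall 0 1), ‖u‖ = ‖T‖}

/-! On a reflexive space every functional attains its norm. If `u` in the closure of `T(B_X)` has
norm `‖T‖` and `φ` norms `u`, then `φ ∘ T` has norm `‖T‖`, and a point where it attains its norm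
is one where `T` does. Conversely, the operators `f ⊗ y` of rank one are compact, so they quasi
attain their norm; if they attain it, then so does every functional `f`, and `X` is reflexive by
James' theorem.

For James' theorem, suppose that `E` is a real Banach space which is not reflexive. Some `Φ` in
the unit sphere of the bidual has distance more than `θ` to `E`. Alternating between `f ∈ E*` that
vanish on the points chosen so far (available since `Φ` is far from `E`) and `x ∈ E` that
approximate `Φ` on the functionals chosen so far (Goldstine) produces functionals whose convex
combinations are at distance at least `θ` from all their limit functionals. Following Pryce, a
subsequence has all its limit functionals equidistant from each element of its span. One then
chooses successive convex blocks `g n` for which the partial sums of `∑ β n • (g n - w)` grow in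
norm at a definite rate; by equidistance `w` may be replaced by a limit functional `v` of the
blocks themselves. If `β n` decays fast and the sum attains its norm at `y`, then `g n y - v y` is
bounded below by a positive constant, which a limit functional does not allow. -/

open Filter Topology

section RealFunctionals

variable {E : Type*} [NormedAddCommGroup E] [NormedSpace ℝ E] {f : StrongDual ℝ E}

theorem apply_le_norm_of_norm_le_one {x : E} (hx : ‖x‖ ≤ 1) : f x ≤ ‖f‖ :=
  (le_abs_self _).trans (f.unit_le_opNorm x hx)

theorem exists_lt_apply_of_lt_norm {c : ℝ} (hc : c < ‖f‖) : ∃ x : E, ‖x‖ ≤ 1 ∧ c < f x := by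
  obtain ⟨x, hx, hcx⟩ := f.exists_lt_apply_of_lt_opNorm hc
  rcases lt_abs.1 hcx with h | h
  · exact ⟨x, hx.le, h⟩
  · exact ⟨-x, by simpa using hx.le, by simpa using h⟩

theorem norm_le_of_forall_apply_le {c : ℝ} (h : ∀ x : E, ‖x‖ ≤ 1 → f x ≤ c) : ‖f‖ ≤ c := by
  by_contra! hc
  obtain ⟨x, hx, hcx⟩ := exists_lt_apply_of_lt_norm hc
  exact (h x hx).not_gt hcx

end RealFunctionals

section Helly

instance {E : Type*} [AddCommGroup E] [Module ℝ E] [TopologicalSpace E] :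
    LocallyConvexSpace ℝ (WeakDual ℝ E) :=
  inferInstanceAs (LocallyConvexSpace ℝ (WeakBilin (topDualPairing ℝ E)))

theorem exists_eq_eval_of_weakDual {𝕜 E : Type*} [NontriviallyNormedField 𝕜] [AddCommGroup E]
    [Module 𝕜 E] [TopologicalSpace E] (φ : StrongDual 𝕜 (WeakDual 𝕜 E)) :
    ∃ x : E, ∀ f : WeakDual 𝕜 E, φ f = f x := by
  obtain ⟨x, rfl⟩ := LinearMap.dualEmbedding_surjective (E := StrongDual 𝕜 E) (F := E)
    (topDualPairing 𝕜 E) φ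
  exact ⟨x, fun _ => rfl⟩

variable {E : Type*} [NormedAddCommGroup E] [NormedSpace ℝ E]

theorem toWeakDual_mem_closure_image_closedBall {Φ : StrongDual ℝ (StrongDual ℝ E)}
    (hΦ : ‖Φ‖ ≤ 1) :
    StrongDual.toWeakDual Φ ∈ closure ((fun x => StrongDual.toWeakDual
      (NormedSpace.inclusionInDoubleDual ℝ E x)) '' Metric.closedBall 0 1) := by
  by_contra hcon
  have hconv := ((convex_closedBall (0 : E) 1).linear_image
    (StrongDual.toWeakDual.toLinearMap ∘ₗ
      (NormedSpace.inclusionInDoubleDual ℝ E).toLinearMap)).closure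
  obtain ⟨φ, c, hφ, hc⟩ := geometric_hahn_banach_closed_point hconv isClosed_closure hcon
  obtain ⟨f, hf⟩ := exists_eq_eval_of_weakDual φ
  rw [hf] at hc
  have hfc : ‖f‖ ≤ c := norm_le_of_forall_apply_le fun x hx => by
    have := hφ _ (subset_closure ⟨x, by simpa using hx, rfl⟩)
    rw [hf] at this
    exact this.le
  have : Φ f ≤ ‖f‖ := (le_abs_self _).trans (Φ.le_of_opNorm_le hΦ f |>.trans_eq (one_mul _))
  exact (this.trans hfc).not_gt hc

theorem exists_norm_le_one_forall_lt_apply {Φ : StrongDual ℝ (StrongDual ℝ E)} (hΦ : ‖Φ‖ ≤ 1)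
    {θ : ℝ} {s : Set (StrongDual ℝ E)} (hfin : s.Finite) (hs : ∀ f ∈ s, θ < Φ f) :
    ∃ x : E, ‖x‖ ≤ 1 ∧ ∀ f ∈ s, θ < f x := by
  have hopen : IsOpen {Ψ : WeakDual ℝ (StrongDual ℝ E) | ∀ f ∈ s, θ < Ψ f} := by
    simp only [Set.ofPred_forall]
    exact hfin.isOpen_biInter fun f _ => isOpen_lt continuous_const (WeakDual.eval_continuous f)
  obtain ⟨_, hx, x, hx1, rfl⟩ :=
    mem_closure_iff.1 (toWeakDual_mem_closure_image_closedBall hΦ) _ hopen hs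
  exact ⟨x, by simpa using hx1, hx⟩

theorem exists_mem_norm_le_one_lt_apply {p : Submodule ℝ E} {f : StrongDual ℝ E} {θ : ℝ}
    (h : ∀ g : StrongDual ℝ E, (∀ x ∈ p, g x = 0) → θ < ‖f - g‖) :
    ∃ x ∈ p, ‖x‖ ≤ 1 ∧ θ < f x := by
  obtain ⟨g, hgp, hg⟩ := exists_extension_norm_eq p (f.comp p.subtypeL)
  have hlt : θ < ‖f.comp p.subtypeL‖ := by
    have := h (f - g) fun x hx => by simpa [sub_eq_zero] using (hgp ⟨x, hx⟩).symm
    rwa [sub_sub_cancel, hg] at this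
  obtain ⟨x, hx, hθx⟩ := exists_lt_apply_of_lt_norm hlt
  exact ⟨x, x.2, hx, hθx⟩

theorem exists_inclusionInDoubleDual_eq_of_forall_apply_eq_zero {𝕜 E : Type*}
    [NontriviallyNormedField 𝕜] [NormedAddCommGroup E] [NormedSpace 𝕜 E]
    {s : Set E} (hfin : s.Finite)
    {Φ : StrongDual 𝕜 (StrongDual 𝕜 E)}
    (hΦ : ∀ f : StrongDual 𝕜 E, (∀ x ∈ s, f x = 0) → Φ f = 0) :
    ∃ x : E, NormedSpace.inclusionInDoubleDual 𝕜 E x = Φ := by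
  have := hfin.to_subtype
  let L (x : s) : StrongDual 𝕜 E →ₗ[𝕜] 𝕜 := NormedSpace.inclusionInDoubleDual 𝕜 E x
  have hspan : Φ.toLinearMap ∈ Submodule.span 𝕜 (Set.range L) :=
    mem_span_of_iInf_ker_le_ker fun f hf => hΦ f fun x hx =>
      (Submodule.mem_iInf _).1 hf ⟨x, hx⟩
  have := Fintype.ofFinite s
  obtain ⟨c, hc⟩ := (Submodule.mem_span_range_iff_exists_fun 𝕜).1 hspan
  refine ⟨∑ x, c x • (x : E), ?_⟩
  ext f
  simpa [L] using LinearMap.congr_fun hc f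

theorem exists_norm_le_one_forall_apply_eq_zero {Φ : StrongDual ℝ (StrongDual ℝ E)} {θ : ℝ}
    (hΦ : ∀ x : E, θ < ‖Φ - NormedSpace.inclusionInDoubleDual ℝ E x‖) {s : Set E}
    (hfin : s.Finite) :
    ∃ f : StrongDual ℝ E, ‖f‖ ≤ 1 ∧ θ < Φ f ∧ ∀ x ∈ s, f x = 0 := by
  let p : Submodule ℝ (StrongDual ℝ E) :=
    { carrier := {f | ∀ x ∈ s, f x = 0}
      zero_mem' := by simp
      add_mem' := fun hf hg x hx => by simp [hf x hx, hg x hx]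
      smul_mem' := fun c f hf x hx => by simp [hf x hx] }
  obtain ⟨f, hf0, hf1, hf⟩ := exists_mem_norm_le_one_lt_apply (p := p) (f := Φ) fun Ψ hΨ => by
    obtain ⟨x, rfl⟩ := exists_inclusionInDoubleDual_eq_of_forall_apply_eq_zero hfin hΨ
    exact hΦ x
  exact ⟨f, hf1, hf, hf0⟩

end Helly

theorem exists_seq_of_forall_exists_succ {α : Type*} {P : ℕ → α → Prop} {R : ℕ → α → α → Prop}
    {a : α} (ha : P 0 a) (h : ∀ n b, P n b → ∃ c, P (n + 1) c ∧ R n b c) :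
    ∃ s : ℕ → α, s 0 = a ∧ ∀ n, P n (s n) ∧ R n (s n) (s (n + 1)) := by
  choose! next hP hR using h
  let s : ℕ → α := fun n => Nat.rec a next n
  have hs (n : ℕ) : P n (s n) := by
    induction n with
    | zero => exact ha
    | succ n ih => exact hP n (s n) ih
  exact ⟨s, rfl, fun n => ⟨hs n, hR n (s n) (hs n)⟩⟩

theorem exists_seq_tendsto_forall_of_antitone {α ι : Type*} [Countable ι] [Nonempty ι]
    {P : ι → Filter α → Prop} (hanti : ∀ i, Antitone (P i))
    (h : ∀ i (F : Filter α) [F.NeBot], ∃ A : Set α, (F ⊓ 𝓟 A).NeBot ∧ P i (F ⊓ 𝓟 A))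
    (F : Filter α) [F.NeBot] [F.IsCountablyGenerated] :
    ∃ φ : ℕ → α, Tendsto φ atTop F ∧ ∀ i, P i (map φ atTop) := by
  obtain ⟨e, he⟩ := exists_surjective_nat ι
  obtain ⟨G, hG₀, hG⟩ := exists_seq_of_forall_exists_succ
    (P := fun _ (G : Filter α) => G.NeBot ∧ G.IsCountablyGenerated)
    (R := fun n G G' => G' ≤ G ∧ P (e n) G') (a := F) ⟨inferInstance, inferInstance⟩ (by
      rintro n G ⟨_, _⟩
      obtain ⟨A, hA, hPA⟩ := h (e n) G
      exact ⟨G ⊓ 𝓟 A, ⟨hA, inferInstance⟩, inf_le_left, hPA⟩)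
  have hGanti : Antitone G := antitone_nat_of_succ_le fun n => (hG n).2.1
  have (n : ℕ) : (G n).IsCountablyGenerated := (hG n).1.2
  have : (⨅ n, G n).NeBot := iInf_neBot_of_directed' hGanti.directed_ge fun n => (hG n).1.1
  obtain ⟨φ, hφ⟩ := exists_seq_tendsto (⨅ n, G n)
  have hφG (n : ℕ) : map φ atTop ≤ G n := hφ.trans (iInf_le G n)
  refine ⟨φ, hG₀ ▸ hφG 0, fun i => ?_⟩
  obtain ⟨n, rfl⟩ := he i
  exact hanti (e n) (hφG (n + 1)) (hG n).2.2

section LimitFunctionals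

variable {ι E : Type*} [NormedAddCommGroup E] [NormedSpace ℝ E]

/-- The functionals lying pointwise between the lower and the upper limit of `f` along `F`. By
linearity it is enough to bound them by the upper limit. -/
def limitFunctionals (F : Filter ι) (f : ι → StrongDual ℝ E) : Set (StrongDual ℝ E) :=
  {w | ∀ x c, (∀ᶠ i in F, f i x ≤ c) → w x ≤ c}

variable {F : Filter ι} {f : ι → StrongDual ℝ E} {w : StrongDual ℝ E}

theorem le_apply_of_mem_limitFunctionals (hw : w ∈ limitFunctionals F f) {x : E} {c : ℝ}
    (h : ∀ᶠ i in F, c ≤ f i x) : c ≤ w x := by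
  simpa using hw (-x) (-c) (h.mono fun i hi => by simpa using hi)

theorem limitFunctionals_mono {G : Filter ι} (h : G ≤ F) :
    limitFunctionals G f ⊆ limitFunctionals F f :=
  fun _ hw x c hc => hw x c (h hc)

theorem norm_le_of_mem_limitFunctionals {C : ℝ} (hf : ∀ i, ‖f i‖ ≤ C)
    (hw : w ∈ limitFunctionals F f) : ‖w‖ ≤ C :=
  norm_le_of_forall_apply_le fun x hx =>
    hw x C (.of_forall fun i => (apply_le_norm_of_norm_le_one hx).trans (hf i))

theorem limitFunctionals_nonempty [F.NeBot] {C : ℝ} (hf : ∀ i, ‖f i‖ ≤ C) :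
    (limitFunctionals F f).Nonempty := by
  obtain ⟨w, -, hw⟩ := (WeakDual.isCompact_closedBall (𝕜 := ℝ) (0 : StrongDual ℝ E) C)
    |>.exists_mapClusterPt (f := F) (u := fun i => StrongDual.toWeakDual (f i))
      (tendsto_principal.2 (.of_forall fun i => by simpa using hf i))
  refine ⟨WeakDual.toStrongDual w, fun x c hc => ?_⟩
  have hclosed : IsClosed {g : WeakDual ℝ E | g x ≤ c} :=
    isClosed_le (WeakDual.eval_continuous x) continuous_const
  exact hclosed.mem_of_mapClusterPt hw hc

theorem limitFunctionals_convexHull_subset {f g : ℕ → StrongDual ℝ E}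
    (hg : ∀ n, g n ∈ convexHull ℝ (f '' Set.Ici n)) :
    limitFunctionals atTop g ⊆ limitFunctionals atTop f := by
  intro w hw x c hc
  obtain ⟨N, hN⟩ := eventually_atTop.1 hc
  refine hw x c (eventually_atTop.2 ⟨N, fun n hn => ?_⟩)
  have hconv : Convex ℝ {h : StrongDual ℝ E | h x ≤ c} :=
    convex_halfSpace_le ⟨fun _ _ => rfl, fun _ _ => rfl⟩ c
  refine convexHull_min ?_ hconv (hg n)
  rintro _ ⟨k, hk, rfl⟩
  exact hN k (hn.trans hk)

theorem exists_inf_principal_norm_sub_le [F.NeBot] {C : ℝ} (hf : ∀ i, ‖f i‖ ≤ C)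
    (h : StrongDual ℝ E) {ε : ℝ} (hε : 0 < ε) :
    ∃ A : Set ι, (F ⊓ 𝓟 A).NeBot ∧ ∀ w ∈ limitFunctionals (F ⊓ 𝓟 A) f,
      ∀ w' ∈ limitFunctionals (F ⊓ 𝓟 A) f, ‖h - w‖ ≤ ‖h - w'‖ + ε := by
  -- Take a limit functional `v` almost farthest from `h` and a point `x` almost norming `h - v`.
  -- Indices with `f i x ≤ v x + ε / 2` keep all remaining limit functionals as far from `h`.
  let N : Set ℝ := (fun w => ‖h - w‖) '' limitFunctionals F f
  have hbdd : BddAbove N := by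
    refine ⟨‖h‖ + C, ?_⟩
    rintro _ ⟨w, hw, rfl⟩
    exact (norm_sub_le h w).trans (by gcongr; exact norm_le_of_mem_limitFunctionals hf hw)
  obtain ⟨_, ⟨v, hv, rfl⟩, hNv⟩ := exists_lt_of_lt_csSup
    ((limitFunctionals_nonempty (F := F) hf).image _) (sub_lt_self (sSup N) (half_pos hε))
  obtain ⟨x, hx, hvx⟩ := exists_lt_apply_of_lt_norm hNv
  refine ⟨{i | f i x ≤ v x + ε / 2}, frequently_mem_iff_neBot.1 fun hA => ?_,
    fun w hw w' hw' => ?_⟩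
  · have := le_apply_of_mem_limitFunctionals hv (hA.mono fun i hi => (not_le.1 hi).le)
    linarith
  · have hwN : ‖h - w‖ ≤ sSup N :=
      le_csSup hbdd ⟨w, limitFunctionals_mono inf_le_left hw, rfl⟩
    have hw'x : w' x ≤ v x + ε / 2 := hw' x _ (mem_inf_of_right (mem_principal_self _))
    have hw'n : (h - w') x ≤ ‖h - w'‖ := apply_le_norm_of_norm_le_one hx
    rw [sub_apply] at hvx hw'n
    linarith

theorem exists_subseq_norm_sub_eq {f : ℕ → StrongDual ℝ E} {C : ℝ} (hf : ∀ n, ‖f n‖ ≤ C) :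
    ∃ φ : ℕ → ℕ, Tendsto φ atTop atTop ∧ ∀ h ∈ Submodule.span ℝ (Set.range f),
      ∀ w ∈ limitFunctionals atTop (f ∘ φ), ∀ w' ∈ limitFunctionals atTop (f ∘ φ),
        ‖h - w‖ = ‖h - w'‖ := by
  obtain ⟨D, hDc, hD⟩ :=
    ((Set.countable_range f).isSeparable.span (R := ℝ) : TopologicalSpace.IsSeparable _)
  have := hDc.to_subtype
  have : Nonempty D := (closure_nonempty_iff.1 ⟨0, hD (Submodule.zero_mem _)⟩).to_subtype
  obtain ⟨φ, hφ, hle⟩ := exists_seq_tendsto_forall_of_antitone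
    (P := fun (i : D × ℕ) F => ∀ w ∈ limitFunctionals F f, ∀ w' ∈ limitFunctionals F f,
      ‖i.1 - w‖ ≤ ‖i.1 - w'‖ + 1 / ((i.2 : ℝ) + 1))
    (fun i F G hFG hG w hw w' hw' =>
      hG w (limitFunctionals_mono hFG hw) w' (limitFunctionals_mono hFG hw'))
    (fun i F _ => exists_inf_principal_norm_sub_le hf i.1 Nat.one_div_pos_of_nat) atTop
  suffices ∀ h ∈ Submodule.span ℝ (Set.range f), ∀ w ∈ limitFunctionals atTop (f ∘ φ),
      ∀ w' ∈ limitFunctionals atTop (f ∘ φ), ‖h - w‖ ≤ ‖h - w'‖ from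
    ⟨φ, hφ, fun h hh w hw w' hw' => (this h hh w hw w' hw').antisymm (this h hh w' hw' w hw)⟩
  intro h hh w hw w' hw'
  have hclosed : IsClosed {h : StrongDual ℝ E | ‖h - w‖ ≤ ‖h - w'‖} :=
    isClosed_le (by fun_prop) (by fun_prop)
  refine closure_minimal (fun d hd => ?_) hclosed (hD hh)
  refine le_of_forall_pos_le_add (a := ‖d - w‖) (b := ‖d - w'‖) fun ε hε => ?_
  obtain ⟨n, hn⟩ := exists_nat_one_div_lt hε
  have := hle (⟨d, hd⟩, n) w hw w' hw'
  linarith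

end LimitFunctionals

section James

/-- Reflexivity of a normed space: the canonical embedding into the bidual is onto. -/
def IsReflexiveSpace (𝕜 X : Type*) [RCLike 𝕜] [NormedAddCommGroup X] [NormedSpace 𝕜 X] : Prop :=
  Function.Surjective (NormedSpace.inclusionInDoubleDual 𝕜 X)

section TriangularArray

variable {E : Type*} [NormedAddCommGroup E] [NormedSpace ℝ E]

theorem exists_lt_norm_sub_of_not_isReflexiveSpace {𝕜 X : Type*} [RCLike 𝕜]
    [NormedAddCommGroup X] [NormedSpace 𝕜 X] [CompleteSpace X]
    (hX : ¬IsReflexiveSpace 𝕜 X) {θ : ℝ} (hθ : θ < 1) :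
    ∃ Φ : StrongDual 𝕜 (StrongDual 𝕜 X), ‖Φ‖ = 1 ∧
      ∀ x : X, θ < ‖Φ - NormedSpace.inclusionInDoubleDual 𝕜 X x‖ := by
  obtain ⟨r, hθr, hr⟩ := exists_between hθ
  let p := (NormedSpace.inclusionInDoubleDual 𝕜 X).toLinearMap.range
  have hclosed : IsClosed (p : Set (StrongDual 𝕜 (StrongDual 𝕜 X))) :=
    (NormedSpace.inclusionInDoubleDualLi (E := X) 𝕜).isometry.isUniformInducing
      |>.isComplete_range.isClosed
  have hproper : ∃ Φ, Φ ∉ p := not_forall.1 hX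
  obtain ⟨Φ, -, hΦ, hdist⟩ := riesz_lemma_of_lt_one (𝕜 := 𝕜)
    (E := StrongDual 𝕜 (StrongDual 𝕜 X)) hclosed hproper hr
  exact ⟨Φ, hΦ, fun x => hθr.trans_le (hdist _ ⟨x, rfl⟩)⟩

theorem exists_triangular_seq_of_not_isReflexiveSpace [CompleteSpace E]
    (hE : ¬IsReflexiveSpace ℝ E) {θ : ℝ} (hθ : θ < 1) :
    ∃ (f : ℕ → StrongDual ℝ E) (x : ℕ → E), (∀ n, ‖f n‖ ≤ 1) ∧ (∀ n, ‖x n‖ ≤ 1) ∧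
      (∀ k, ∀ n > k, f n (x k) = 0) ∧ ∀ n, ∀ k ≥ n, θ < f n (x k) := by
  obtain ⟨Φ, hΦ, hdist⟩ := exists_lt_norm_sub_of_not_isReflexiveSpace hE hθ
  obtain ⟨u, hu, hur⟩ := exists_seq_of_forall_finset_exists
    (fun q : StrongDual ℝ E × E => (‖q.1‖ ≤ 1 ∧ ‖q.2‖ ≤ 1) ∧ θ < Φ q.1 ∧ θ < q.1 q.2)
    (fun q q' => q'.1 q.2 = 0 ∧ θ < q.1 q'.2) (by
      intro s hs
      obtain ⟨f, hf1, hf, hf0⟩ :=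
        exists_norm_le_one_forall_apply_eq_zero hdist (s.finite_toSet.image Prod.snd)
      obtain ⟨x, hx1, hx⟩ := exists_norm_le_one_forall_lt_apply hΦ.le
        ((s.finite_toSet.image Prod.fst).insert f)
        (Set.forall_mem_insert.2 ⟨hf, Set.forall_mem_image.2 fun q hq => (hs q hq).2.1⟩)
      rw [Set.forall_mem_insert] at hx
      exact ⟨(f, x), ⟨⟨hf1, hx1⟩, hf, hx.1⟩, fun q hq =>
        ⟨hf0 _ (Set.mem_image_of_mem _ hq), hx.2 _ (Set.mem_image_of_mem _ hq)⟩⟩)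
  refine ⟨fun n => (u n).1, fun n => (u n).2, fun n => (hu n).1.1, fun n => (hu n).1.2,
    fun k n hn => (hur k n hn).1, fun n k hk => ?_⟩
  rcases hk.eq_or_lt with rfl | hnk
  · exact (hu _).2.2
  · exact (hur n k hnk).2

theorem le_norm_sub_of_mem_limitFunctionals {f : ℕ → StrongDual ℝ E} {x : ℕ → E} {θ : ℝ}
    (hx : ∀ n, ‖x n‖ ≤ 1) (hf₀ : ∀ k, ∀ n > k, f n (x k) = 0)
    (hf : ∀ n, ∀ k ≥ n, θ < f n (x k)) {a w : StrongDual ℝ E}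
    (ha : a ∈ convexHull ℝ (Set.range f)) (hw : w ∈ limitFunctionals atTop f) : θ ≤ ‖a - w‖ := by
  have hconv : Convex ℝ {a : StrongDual ℝ E | ∀ᶠ k in atTop, θ ≤ a (x k)} := by
    intro a ha b hb s t hs ht hst
    filter_upwards [ha, hb] with k hak hbk
    exact convex_Ici θ hak hbk hs ht hst
  have hevent : ∀ᶠ k in atTop, θ ≤ a (x k) := by
    refine convexHull_min ?_ hconv ha
    rintro _ ⟨n, rfl⟩
    exact (eventually_ge_atTop n).mono fun k hk => (hf n k hk).le
  obtain ⟨k, hk⟩ := hevent.exists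
  have hwk : w (x k) ≤ 0 := hw _ _ ((eventually_gt_atTop k).mono fun n hn => (hf₀ k n hn).le)
  calc θ ≤ a (x k) - w (x k) := by linarith
    _ = (a - w) (x k) := rfl
    _ ≤ ‖a - w‖ := apply_le_norm_of_norm_le_one (hx k)

theorem exists_equidistant_seq_of_not_isReflexiveSpace [CompleteSpace E]
    (hE : ¬IsReflexiveSpace ℝ E) {θ : ℝ} (hθ : θ < 1) :
    ∃ f : ℕ → StrongDual ℝ E, (∀ n, ‖f n‖ ≤ 1) ∧
      (∀ a ∈ convexHull ℝ (Set.range f), ∀ w ∈ limitFunctionals atTop f, θ ≤ ‖a - w‖) ∧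
      ∀ h ∈ Submodule.span ℝ (Set.range f), ∀ w ∈ limitFunctionals atTop f,
        ∀ w' ∈ limitFunctionals atTop f, ‖h - w‖ = ‖h - w'‖ := by
  obtain ⟨f, x, hf1, hx, hf₀, hf⟩ :=
    exists_triangular_seq_of_not_isReflexiveSpace hE hθ
  obtain ⟨φ, hφ, hdist⟩ := exists_subseq_norm_sub_eq hf1
  have hrange : Set.range (f ∘ φ) ⊆ Set.range f := Set.range_comp_subset_range φ f
  have hlimit : limitFunctionals atTop (f ∘ φ) ⊆ limitFunctionals atTop f :=
    limitFunctionals_mono (F := atTop) (G := map φ atTop) hφ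
  exact ⟨f ∘ φ, fun n => hf1 (φ n),
    fun a ha w hw => le_norm_sub_of_mem_limitFunctionals hx hf₀ hf (convexHull_mono hrange ha)
      (hlimit hw),
    fun h hh => hdist h (Submodule.span_mono hrange hh)⟩

end TriangularArray

section Growth

theorem exists_mem_forall_le_of_convexOn {V : Type*} [AddCommGroup V] [Module ℝ V] {p : V → ℝ}
    (hp : ConvexOn ℝ Set.univ p) {K : Set V} (hK : Convex ℝ K) (hne : K.Nonempty) {u : V}
    {β β' ρ : ℝ} (hβ : 0 < β) (hβ' : 0 < β')
    (h : ∃ m > β * ρ + p u, ∀ a ∈ K, m ≤ p (u + β • a)) :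
    ∃ b ∈ K, ∃ m > β' * ρ + p (u + β • b), ∀ a ∈ K, m ≤ p (u + β • b + β' • a) := by
  obtain ⟨m, hm, hmK⟩ := h
  -- At parameter `β / (β + β')`, the segment from `u` to `u + β • b + β' • a` meets `u + β • K`,
  -- where `p` is at least `sInf N`; by convexity the slope `(sInf N - p u) / β > ρ` persists.
  let N : Set ℝ := (fun a => p (u + β • a)) '' K
  have hmN : m ≤ sInf N := le_csInf (hne.image _) (Set.forall_mem_image.2 hmK)
  have hN (a : V) (ha : a ∈ K) : sInf N ≤ p (u + β • a) :=
    csInf_le ⟨m, Set.forall_mem_image.2 hmK⟩ ⟨a, ha, rfl⟩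
  have hslope : ρ < (sInf N - p u) / β := by
    rw [lt_div_iff₀ hβ]
    linarith
  have hgap : sInf N < sInf N + β' * ((sInf N - p u) / β - ρ) :=
    lt_add_of_pos_right _ (mul_pos hβ' (sub_pos.2 hslope))
  obtain ⟨_, ⟨b, hb, rfl⟩, hbN⟩ := exists_lt_of_csInf_lt (hne.image _) hgap
  refine ⟨b, hb, sInf N + β' * ((sInf N - p u) / β), ?_, fun a ha => ?_⟩
  · dsimp only at hbN
    linarith
  have hsum : 0 < β + β' := add_pos hβ hβ'
  have hmem : (β / (β + β')) • b + (β' / (β + β')) • a ∈ K :=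
    hK hb ha (by positivity) (by positivity) (by field_simp)
  have hcomb : u + β • ((β / (β + β')) • b + (β' / (β + β')) • a) =
      (β / (β + β')) • (u + β • b + β' • a) + (β' / (β + β')) • u := by
    match_scalars <;> field_simp
  have hconv : sInf N ≤ β / (β + β') * p (u + β • b + β' • a) + β' / (β + β') * p u :=
    calc sInf N ≤ _ := hN _ hmem
      _ = _ := by rw [hcomb]
      _ ≤ _ := hp.2 trivial trivial (by positivity) (by positivity) (by field_simp)
  field_simp at hconv ⊢
  linarith

theorem exists_seq_mem_norm_growth {V : Type*} [NormedAddCommGroup V] [NormedSpace ℝ V]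
    {K : ℕ → Set V} (hK : ∀ n, Convex ℝ (K n)) (hne : ∀ n, (K n).Nonempty) (hanti : Antitone K)
    {β : ℕ → ℝ} (hβ : ∀ n, 0 < β n) {ρ θ : ℝ} (hρ : ρ < θ) (hθ : ∀ a ∈ K 0, θ ≤ ‖a‖) :
    ∃ b : ℕ → V, (∀ n, b n ∈ K n) ∧ ∀ n, β n * ρ + ‖∑ i ∈ Finset.range n, β i • b i‖ ≤
      ‖∑ i ∈ Finset.range (n + 1), β i • b i‖ := by
  have hzero : ∃ m > β 0 * ρ + ‖(0 : V)‖, ∀ a ∈ K 0, m ≤ ‖0 + β 0 • a‖ := by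
    refine ⟨β 0 * θ, by simpa using mul_lt_mul_of_pos_left hρ (hβ 0), fun a ha => ?_⟩
    rw [zero_add, norm_smul, Real.norm_of_nonneg (hβ 0).le]
    exact mul_le_mul_of_nonneg_left (hθ a ha) (hβ 0).le
  obtain ⟨s, hs₀, hs⟩ := exists_seq_of_forall_exists_succ
    (P := fun n u => ∃ m > β n * ρ + ‖u‖, ∀ a ∈ K n, m ≤ ‖u + β n • a‖)
    (R := fun n u u' => ∃ b ∈ K n, u' = u + β n • b) hzero (by
      intro n u hu
      obtain ⟨b, hb, m, hm, hmK⟩ :=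
        exists_mem_forall_le_of_convexOn convexOn_univ_norm (hK n) (hne n) (hβ n) (hβ (n + 1)) hu
      exact ⟨u + β n • b, ⟨m, hm, fun a ha => hmK a (hanti n.le_succ ha)⟩, b, hb, rfl⟩)
  choose b hbK hbs using fun n => (hs n).2
  have hsum (n : ℕ) : ∑ i ∈ Finset.range n, β i • b i = s n := by
    induction n with
    | zero => simp [hs₀]
    | succ n ih => rw [Finset.sum_range_succ, ih, hbs]
  refine ⟨b, hbK, fun n => ?_⟩
  obtain ⟨m, hm, hmK⟩ := (hs n).1
  rw [hsum, hsum, hbs]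
  exact (gt_iff_lt.1 hm).le.trans (hmK _ (hbK n))

theorem norm_sub_smul_eq_of_mem {V : Type*} [NormedAddCommGroup V] [NormedSpace ℝ V]
    {p : Submodule ℝ V} {w w' : V} (h : ∀ v ∈ p, ‖v - w‖ = ‖v - w'‖) {v : V} (hv : v ∈ p)
    (c : ℝ) : ‖v - c • w‖ = ‖v - c • w'‖ := by
  rcases eq_or_ne c 0 with rfl | hc
  · simp
  have hscale (y : V) : v - c • y = c • (c⁻¹ • v - y) := by rw [smul_sub, smul_inv_smul₀ hc]
  rw [hscale, hscale, norm_smul, norm_smul, h _ (p.smul_mem _ hv)]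

theorem exists_blocks_norm_growth {E : Type*} [NormedAddCommGroup E] [NormedSpace ℝ E]
    {f : ℕ → StrongDual ℝ E} {C : ℝ} (hf : ∀ n, ‖f n‖ ≤ C) {θ : ℝ}
    (hsep : ∀ a ∈ convexHull ℝ (Set.range f), ∀ w ∈ limitFunctionals atTop f, θ ≤ ‖a - w‖)
    (hdist : ∀ h ∈ Submodule.span ℝ (Set.range f), ∀ w ∈ limitFunctionals atTop f,
      ∀ w' ∈ limitFunctionals atTop f, ‖h - w‖ = ‖h - w'‖)
    {β : ℕ → ℝ} (hβ : ∀ n, 0 < β n) {ρ : ℝ} (hρ : ρ < θ) :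
    ∃ g : ℕ → StrongDual ℝ E, (∀ n, ‖g n‖ ≤ C) ∧ ∃ v ∈ limitFunctionals atTop g, ∀ n,
      β n * ρ + ‖∑ i ∈ Finset.range n, β i • (g i - v)‖ ≤
        ‖∑ i ∈ Finset.range (n + 1), β i • (g i - v)‖ := by
  obtain ⟨w, hw⟩ := limitFunctionals_nonempty (F := atTop) hf
  let K (n : ℕ) : Set (StrongDual ℝ E) := (· + w) ⁻¹' convexHull ℝ (f '' Set.Ici n)
  have hsub (n : ℕ) : convexHull ℝ (f '' Set.Ici n) ⊆ convexHull ℝ (Set.range f) :=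
    convexHull_mono (Set.image_subset_range _ _)
  obtain ⟨b, hb, hgrow⟩ := exists_seq_mem_norm_growth (K := K)
    (fun n => (convex_convexHull ℝ _).translate_preimage_left w)
    (fun n => ⟨f n - w, by
      simpa [K] using subset_convexHull ℝ _ (Set.mem_image_of_mem f Set.self_mem_Ici)⟩)
    (fun m n hmn a ha => convexHull_mono (Set.image_mono (Set.Ici_subset_Ici.2 hmn)) ha) hβ hρ
    (fun a ha => by simpa using hsep _ (hsub 0 ha) w hw)
  let g (n : ℕ) := b n + w
  have hgC (n : ℕ) : ‖g n‖ ≤ C := by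
    have : convexHull ℝ (f '' Set.Ici n) ⊆ Metric.closedBall 0 C :=
      convexHull_min (Set.image_subset_iff.2 fun k _ => by simpa using hf k)
        (convex_closedBall 0 C)
    simpa using this (hb n)
  obtain ⟨v, hv⟩ := limitFunctionals_nonempty (F := atTop) hgC
  refine ⟨g, hgC, v, hv, ?_⟩
  have hgp (n : ℕ) : ∑ i ∈ Finset.range n, β i • g i ∈ Submodule.span ℝ (Set.range f) :=
    Submodule.sum_mem _ fun i _ => Submodule.smul_mem _ _
      (convexHull_min Submodule.subset_span (Submodule.convex _) (hsub i (hb i)))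
  have hswap (n : ℕ) : ‖∑ i ∈ Finset.range n, β i • (g i - v)‖ =
      ‖∑ i ∈ Finset.range n, β i • b i‖ := by
    have hexpand (y : StrongDual ℝ E) : ∑ i ∈ Finset.range n, β i • (g i - y) =
        ∑ i ∈ Finset.range n, β i • g i - (∑ i ∈ Finset.range n, β i) • y := by
      simp only [smul_sub, Finset.sum_sub_distrib, Finset.sum_smul]
    have hequi := fun h hh => hdist h hh v (limitFunctionals_convexHull_subset hb hv) w hw
    rw [hexpand, norm_sub_smul_eq_of_mem hequi (hgp n), ← hexpand]
    simp only [g, add_sub_cancel_right]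
  simpa only [hswap] using hgrow

theorem le_apply_of_norm_growth {E : Type*} [NormedAddCommGroup E] [NormedSpace ℝ E]
    {b : ℕ → StrongDual ℝ E} {z : StrongDual ℝ E} {r ρ C : ℝ} (hr₀ : 0 < r) (hr₁ : r < 1)
    (hb : ∀ n, ‖b n‖ ≤ C)
    (hgrow : ∀ n, r ^ n * ρ + ‖∑ i ∈ Finset.range n, r ^ i • b i‖ ≤
      ‖∑ i ∈ Finset.range (n + 1), r ^ i • b i‖)
    (hz : HasSum (fun n => r ^ n • b n) z) {y : E} (hy : ‖y‖ ≤ 1) (hzy : z y = ‖z‖) (n : ℕ) :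
    ρ - 2 * (C * r / (1 - r)) ≤ b n y := by
  let S (n : ℕ) := ∑ i ∈ Finset.range n, r ^ i • b i
  have hterm (n : ℕ) : ‖r ^ n • b n‖ ≤ C * r ^ n := by
    rw [norm_smul, Real.norm_of_nonneg (by positivity), mul_comm]
    gcongr
    exact hb n
  have htail : ‖z - S (n + 1)‖ ≤ r ^ n * (C * r / (1 - r)) := by
    rw [norm_sub_rev]
    refine (norm_sub_le_of_geometric_bound_of_hasSum hr₁ hterm hz (n + 1)).trans_eq ?_
    ring
  have hnorm : ‖S (n + 1)‖ ≤ ‖z‖ + ‖z - S (n + 1)‖ := norm_le_norm_add_norm_sub _ _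
  have hSy : S n y ≤ ‖S n‖ := apply_le_norm_of_norm_le_one hy
  have hrest : (z - S (n + 1)) y ≤ ‖z - S (n + 1)‖ := apply_le_norm_of_norm_le_one hy
  have hsplit : z y = S n y + r ^ n * b n y + (z - S (n + 1)) y := by
    simp [S, Finset.sum_range_succ]
  have hgn : r ^ n * ρ + ‖S n‖ ≤ ‖S (n + 1)‖ := hgrow n
  refine le_of_mul_le_mul_left ?_ (pow_pos hr₀ n)
  linarith

end Growth

theorem IsReflexiveSpace.of_forall_exists_apply_eq_norm {E : Type*}
    [NormedAddCommGroup E] [NormedSpace ℝ E] [CompleteSpace E]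
    (hE : ∀ f : StrongDual ℝ E, ∃ x : E, ‖x‖ ≤ 1 ∧ f x = ‖f‖) :
    IsReflexiveSpace ℝ E := by
  by_contra hsurj
  -- Any `ρ < θ < 1` and any ratio `r` with `4 * r / (1 - r) < ρ` would do.
  obtain ⟨f, hf, hsep, hdist⟩ :=
    exists_equidistant_seq_of_not_isReflexiveSpace hsurj (show (3 / 4 : ℝ) < 1 by norm_num)
  obtain ⟨g, hg, v, hv, hgrow⟩ := exists_blocks_norm_growth hf hsep hdist
    (β := fun n => (1 / 17) ^ n) (fun n => by positivity) (show (1 / 2 : ℝ) < 3 / 4 by norm_num)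
  have hgv (n : ℕ) : ‖g n - v‖ ≤ 2 := by
    linarith [norm_sub_le (g n) v, hg n, norm_le_of_mem_limitFunctionals hg hv]
  have hsummable : Summable fun n => (1 / 17 : ℝ) ^ n • (g n - v) := by
    refine .of_norm_bounded ((summable_geometric_of_lt_one (r := 1 / 17) (by norm_num)
      (by norm_num)).mul_right 2) fun n => ?_
    rw [norm_smul, Real.norm_of_nonneg (by positivity)]
    gcongr
    exact hgv n
  obtain ⟨y, hy, hzy⟩ := hE (∑' n, (1 / 17 : ℝ) ^ n • (g n - v))
  have hgap (n : ℕ) : v y + 1 / 4 ≤ g n y := by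
    have := le_apply_of_norm_growth (by norm_num) (by norm_num) hgv hgrow hsummable.hasSum hy hzy n
    rw [sub_apply] at this
    norm_num at this
    linarith
  linarith [le_apply_of_mem_limitFunctionals hv (.of_forall hgap)]

end James

section Scalars

variable {𝕜 X : Type*} [RCLike 𝕜] [NormedAddCommGroup X] [NormedSpace 𝕜 X]

theorem exists_apply_eq_norm_of_norm_apply_eq_norm {f : StrongDual 𝕜 X}
    (hf : ∃ x : X, ‖x‖ ≤ 1 ∧ ‖f x‖ = ‖f‖) : ∃ x : X, ‖x‖ ≤ 1 ∧ f x = (‖f‖ : 𝕜) := by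
  obtain ⟨x, hx, hfx⟩ := hf
  obtain ⟨c, hc, hcf⟩ := RCLike.exists_norm_eq_mul_self (f x)
  exact ⟨c • x, by rwa [norm_smul, hc, one_mul], by rw [map_smul, smul_eq_mul, ← hcf, hfx]⟩

theorem IsReflexiveSpace.of_real [NormedSpace ℝ X] [IsScalarTower ℝ 𝕜 X]
    (hX : IsReflexiveSpace ℝ X) : IsReflexiveSpace 𝕜 X := by
  intro Φ
  let e : StrongDual ℝ X →L[ℝ] StrongDual 𝕜 X := StrongDual.extendRCLikeL (𝕜 := 𝕜) (F := X)
  obtain ⟨x, hx⟩ := hX (RCLike.reCLM.comp ((Φ.restrictScalars ℝ).comp e))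
  have hre (f : StrongDual 𝕜 X) : RCLike.re (f x) = RCLike.re (Φ f) := by
    obtain ⟨g, rfl⟩ := (StrongDual.extendRCLikeL (𝕜 := 𝕜) (F := X)).surjective f
    have hg : g x = RCLike.re (Φ (e g)) := DFunLike.congr_fun hx g
    exact (StrongDual.re_extendRCLike_apply g x).trans hg
  refine ⟨x, ContinuousLinearMap.ext fun f => RCLike.ext (hre f) ?_⟩
  simpa using hre ((RCLike.I : 𝕜) • f)

theorem IsReflexiveSpace.of_forall_exists_norm_apply_eq_norm [CompleteSpace X]
    (hX : ∀ f : StrongDual 𝕜 X, ∃ x : X, ‖x‖ ≤ 1 ∧ ‖f x‖ = ‖f‖) : IsReflexiveSpace 𝕜 X := by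
  let _ : NormedSpace ℝ X := NormedSpace.restrictScalars ℝ 𝕜 X
  have : IsScalarTower ℝ 𝕜 X := .of_algebraMap_smul fun _ _ => rfl
  refine .of_real (.of_forall_exists_apply_eq_norm fun g => ?_)
  obtain ⟨x, hx, hgx⟩ := exists_apply_eq_norm_of_norm_apply_eq_norm (hX g.extendRCLike)
  refine ⟨x, hx, ?_⟩
  rw [← StrongDual.re_extendRCLike_apply (𝕜 := 𝕜) g, hgx, RCLike.ofReal_re,
    StrongDual.norm_extendRCLike]

theorem IsReflexiveSpace.exists_norm_eq_one_norm_apply_eq_norm [Nontrivial X]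
    (hX : IsReflexiveSpace 𝕜 X) (f : StrongDual 𝕜 X) : ∃ x : X, ‖x‖ = 1 ∧ ‖f x‖ = ‖f‖ := by
  obtain ⟨Φ, hΦ, hΦf⟩ := exists_dual_vector' 𝕜 f
  obtain ⟨x, rfl⟩ := hX Φ
  refine ⟨x, ?_, ?_⟩
  · rw [← hΦ]
    exact ((NormedSpace.inclusionInDoubleDualLi 𝕜).norm_map x).symm
  · rw [NormedSpace.dual_def] at hΦf
    simp [hΦf]

end Scalars

section NormAttaining

variable (𝕜 X Y : Type*) [RCLike 𝕜] [NormedAddCommGroup X] [NormedSpace 𝕜 X]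
  [NormedAddCommGroup Y] [NormedSpace 𝕜 Y]

/-- The set `NA(X, Y)` of norm-attaining operators. -/
def NA : Set (X →L[𝕜] Y) :=
  {T | ∃ x₀ : X, ‖x₀‖ = 1 ∧ ‖T x₀‖ = ‖T‖}

/-- The set `QNA(X, Y)` of quasi norm-attaining operators. -/
def QNA : Set (X →L[𝕜] Y) :=
  {T | ∃ u ∈ closure (⇑T '' Metric.closedBall 0 1), ‖u‖ = ‖T‖}

variable {𝕜 X Y}

theorem NA_subset_QNA : NA 𝕜 X Y ⊆ QNA 𝕜 X Y := by
  rintro T ⟨x, hx, hTx⟩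
  exact ⟨T x, subset_closure ⟨x, by simp [hx], rfl⟩, hTx⟩

theorem norm_le_opNorm_of_mem_closure_image_closedBall {T : X →L[𝕜] Y} {u : Y}
    (hu : u ∈ closure (⇑T '' Metric.closedBall 0 1)) : ‖u‖ ≤ ‖T‖ := by
  have hsub : ⇑T '' Metric.closedBall 0 1 ⊆ Metric.closedBall 0 ‖T‖ := by
    rintro _ ⟨x, hx, rfl⟩
    simpa using T.unit_le_opNorm x (by simpa using hx)
  simpa using closure_minimal hsub Metric.isClosed_closedBall hu

theorem exists_norm_le_one_norm_comp_eq_of_mem_QNA {T : X →L[𝕜] Y} (hT : T ∈ QNA 𝕜 X Y) :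
    ∃ φ : StrongDual 𝕜 Y, ‖φ‖ ≤ 1 ∧ ‖φ.comp T‖ = ‖T‖ := by
  obtain ⟨u, hu, huT⟩ := hT
  obtain ⟨φ, hφ, hφu⟩ := exists_dual_vector'' 𝕜 u
  refine ⟨φ, hφ, le_antisymm ?_ ?_⟩
  · exact (φ.opNorm_comp_le T).trans (mul_le_of_le_one_left (norm_nonneg T) hφ)
  · have hφu' : φ u ∈ closure (⇑(φ.comp T) '' Metric.closedBall 0 1) := by
      rw [ContinuousLinearMap.coe_comp, Set.image_comp]
      exact image_closure_subset_closure_image φ.continuous ⟨u, hu, rfl⟩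
    simpa [hφu, huT] using norm_le_opNorm_of_mem_closure_image_closedBall hφu'

theorem mem_NA_of_comp_mem_NA {T : X →L[𝕜] Y} {φ : StrongDual 𝕜 Y} (hφ : ‖φ‖ ≤ 1)
    (hφT : ‖φ.comp T‖ = ‖T‖) (h : φ.comp T ∈ NA 𝕜 X 𝕜) : T ∈ NA 𝕜 X Y := by
  obtain ⟨x, hx, hφx⟩ := h
  refine ⟨x, hx, le_antisymm (T.unit_le_opNorm x hx.le) ?_⟩
  calc ‖T‖ = ‖φ (T x)‖ := by rw [← hφT, ← hφx, ContinuousLinearMap.comp_apply]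
    _ ≤ ‖T x‖ := (φ.le_of_opNorm_le hφ _).trans_eq (one_mul _)

theorem IsReflexiveSpace.NA_eq_QNA [Nontrivial X] (hX : IsReflexiveSpace 𝕜 X) :
    NA 𝕜 X Y = QNA 𝕜 X Y := by
  refine NA_subset_QNA.antisymm fun T hT => ?_
  obtain ⟨φ, hφ, hφT⟩ := exists_norm_le_one_norm_comp_eq_of_mem_QNA hT
  exact mem_NA_of_comp_mem_NA hφ hφT (hX.exists_norm_eq_one_norm_apply_eq_norm _)

theorem mem_QNA_of_isCompactOperator {T : X →L[𝕜] Y} (hT : IsCompactOperator T) :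
    T ∈ QNA 𝕜 X Y := by
  have hne : (closure (⇑T '' Metric.closedBall 0 1)).Nonempty :=
    ((Metric.nonempty_closedBall.2 zero_le_one).image T).closure
  obtain ⟨u, hu, hmax⟩ := (hT.isCompact_closure_image_closedBall 1).exists_isMaxOn hne
    continuous_norm.continuousOn
  refine ⟨u, hu, (norm_le_opNorm_of_mem_closure_image_closedBall hu).antisymm ?_⟩
  refine le_of_forall_lt fun c hc => ?_
  obtain ⟨x, hx, hcx⟩ := T.exists_lt_apply_of_lt_opNorm hc
  exact hcx.trans_le (hmax (subset_closure ⟨x, by simpa using hx.le, rfl⟩))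

theorem isCompactOperator_smulRight (f : StrongDual 𝕜 X) (y : Y) :
    IsCompactOperator (f.smulRight y) :=
  (isCompactOperator_of_locallyCompactSpace_dom f).clm_comp
    (ContinuousLinearMap.toSpanSingleton 𝕜 y)

theorem mem_NA_of_smulRight_mem_NA {f : StrongDual 𝕜 X} {y : Y} (hy : y ≠ 0)
    (h : f.smulRight y ∈ NA 𝕜 X Y) : f ∈ NA 𝕜 X 𝕜 := by
  obtain ⟨x, hx, hfx⟩ := h
  refine ⟨x, hx, mul_right_cancel₀ (norm_ne_zero_iff.2 hy) ?_⟩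
  rw [← ContinuousLinearMap.norm_smulRight_apply, ← hfx, ContinuousLinearMap.smulRight_apply,
    norm_smul]

theorem IsReflexiveSpace.of_NA_eq_QNA [CompleteSpace X] [Nontrivial Y]
    (h : NA 𝕜 X Y = QNA 𝕜 X Y) : IsReflexiveSpace 𝕜 X := by
  obtain ⟨y, hy⟩ := exists_ne (0 : Y)
  refine .of_forall_exists_norm_apply_eq_norm fun f => ?_
  obtain ⟨x, hx, hfx⟩ := mem_NA_of_smulRight_mem_NA hy
    (h.symm.subset (mem_QNA_of_isCompactOperator (isCompactOperator_smulRight f y)))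
  exact ⟨x, hx.le, hfx⟩

end NormAttaining

theorem reflexive_iff_NA_eq_QNA_general (𝕜 X Y : Type*) [RCLike 𝕜] [NormedAddCommGroup X]
    [NormedSpace 𝕜 X] [CompleteSpace X] [Nontrivial X] [NormedAddCommGroup Y] [NormedSpace 𝕜 Y]
    [Nontrivial Y] : IsReflexiveSpace 𝕜 X ↔ NA 𝕜 X Y = QNA 𝕜 X Y :=
  ⟨fun hX => hX.NA_eq_QNA, fun h => .of_NA_eq_QNA h⟩

/-- for a Banach space `X`, the following are equivalent:
(a) `X` is reflexive (the canonical embedding into the bidual is surjective);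
(b) `NA(X,Y) = QNA(X,Y)` for every Banach space `Y`;
(c) there is a nontrivial Banach space `Y` with `NA(X,Y) = QNA(X,Y)`. -/
theorem reflexive_iff_NA_eq_QNA (𝕜 : Type) [RCLike 𝕜] (X : Type)
    [NormedAddCommGroup X] [NormedSpace 𝕜 X] [CompleteSpace X] [Nontrivial X] :
    (Function.Surjective (NormedSpace.inclusionInDoubleDual 𝕜 X) ↔
      ∀ (Y : Type) [NormedAddCommGroup Y] [NormedSpace 𝕜 Y] [CompleteSpace Y],
        {T : X →L[𝕜] Y | ∃ x₀ : X, ‖x₀‖ = 1 ∧ ‖T x₀‖ = ‖T‖} =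
        {T : X →L[𝕜] Y | ∃ u ∈ closure (⇑T '' Metric.closedBall 0 1), ‖u‖ = ‖T‖}) ∧
    (Function.Surjective (NormedSpace.inclusionInDoubleDual 𝕜 X) ↔
      Nonempty (NAEqQNAWitness 𝕜 X)) := by
  refine ⟨⟨fun hX Y _ _ _ => IsReflexiveSpace.NA_eq_QNA hX,
    fun h => (reflexive_iff_NA_eq_QNA_general 𝕜 X 𝕜).2 (h 𝕜)⟩,
    fun hX => ⟨{ Y := 𝕜, na_eq_qna := (reflexive_iff_NA_eq_QNA_general 𝕜 X 𝕜).1 hX }⟩, ?_⟩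
  rintro ⟨W, hW⟩
  exact (reflexive_iff_NA_eq_QNA_general 𝕜 X W).2 hW
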